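/- Right multiplication by a unit split octonion parallelizes the pseudo-sphere S^{3,4}: let x be a split octonion with N(x) = 1. Then for the seven imaginary units e₁,…,e₇ and all i, j ∈ {1,…,7}: B(eᵢ·x, x) = 0 and B(eᵢ·x, eⱼ·x) = ηᵢⱼ, where η = diag(1,1,1,−1,−1,−1,−1); i.e. the seven vectors eᵢ·x are orthogonal to x and form a Lorentz-orthonormal frame of the tangent space of S^{3,4} at x. -/

import Mathlib

/-- The split octonions, realized via the Cayley–Dickson construction as pairs
of real quaternions. -/
abbrev SplitOctonion : Type := Quaternion ℝ × Quaternion ℝ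

/-- Cayley–Dickson multiplication for split octonions:
`(a,b)·(c,d) = (a c + d̄ b, d a + b c̄)`. -/
noncomputable def soMul (x y : SplitOctonion) : SplitOctonion :=
  (x.1 * y.1 + star y.2 * x.2, y.2 * x.1 + x.2 * star y.1)

/-- The split-octonionic norm: `N (a,b) = ‖a‖² − ‖b‖²` (difference of
quaternionic norm-squares). -/
noncomputable def soN (x : SplitOctonion) : ℝ :=
  Quaternion.normSq x.1 - Quaternion.normSq x.2

/-- The bilinear form associated with the split-octonionic norm. -/
noncomputable def soB (u v : SplitOctonion) : ℝ :=
  (soN (u + v) - soN u - soN v) / 2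

/-- The seven imaginary units of the split octonions:
`e₁ = (i,0)`, `e₂ = (j,0)`, `e₃ = (k,0)`, `e₄ = (0,1)`, `e₅ = (0,i)`,
`e₆ = (0,j)`, `e₇ = (0,k)`. -/
noncomputable def soUnit : Fin 7 → SplitOctonion :=
  ![((⟨0, 1, 0, 0⟩ : Quaternion ℝ), 0),
    ((⟨0, 0, 1, 0⟩ : Quaternion ℝ), 0),
    ((⟨0, 0, 0, 1⟩ : Quaternion ℝ), 0),
    (0, 1),
    (0, (⟨0, 1, 0, 0⟩ : Quaternion ℝ)),
    (0, (⟨0, 0, 1, 0⟩ : Quaternion ℝ)),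
    (0, (⟨0, 0, 0, 1⟩ : Quaternion ℝ))]

/-- The flat metric `η = diag(1,1,1,−1,−1,−1,−1)` of signature `(3,4)`. -/
def eta34 (i j : Fin 7) : ℝ :=
  if i = j then (if (i : ℕ) < 3 then 1 else -1) else 0

theorem soN_soMul (x y : SplitOctonion) : soN (soMul x y) = soN x * soN y := by
  simp only [soN, soMul, Quaternion.normSq_def', Quaternion.re_add, Quaternion.imI_add,
    Quaternion.imJ_add, Quaternion.imK_add, Quaternion.re_mul, Quaternion.imI_mul,
    Quaternion.imJ_mul, Quaternion.imK_mul, Quaternion.re_star, Quaternion.imI_star,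
    Quaternion.imJ_star, Quaternion.imK_star]
  ring

theorem so_re_zero : ((0 : Quaternion ℝ)).re = 0 := rfl
theorem so_imI_zero : ((0 : Quaternion ℝ)).imI = 0 := rfl
theorem so_imJ_zero : ((0 : Quaternion ℝ)).imJ = 0 := rfl
theorem so_imK_zero : ((0 : Quaternion ℝ)).imK = 0 := rfl
theorem so_re_one : ((1 : Quaternion ℝ)).re = 1 := rfl
theorem so_imI_one : ((1 : Quaternion ℝ)).imI = 0 := rfl
theorem so_imJ_one : ((1 : Quaternion ℝ)).imJ = 0 := rfl
theorem so_imK_one : ((1 : Quaternion ℝ)).imK = 0 := rfl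

theorem soB_eq (u v : SplitOctonion) : soB u v =
    u.1.re * v.1.re + u.1.imI * v.1.imI + u.1.imJ * v.1.imJ + u.1.imK * v.1.imK
    - (u.2.re * v.2.re + u.2.imI * v.2.imI + u.2.imJ * v.2.imJ + u.2.imK * v.2.imK) := by
  simp only [soB, soN, Prod.fst_add, Prod.snd_add, Quaternion.normSq_def', Quaternion.re_add,
    Quaternion.imI_add, Quaternion.imJ_add, Quaternion.imK_add]
  ring

theorem soMul_add_left (u v x : SplitOctonion) :
    soMul (u + v) x = soMul u x + soMul v x := by
  ext1 <;> simp only [soMul, Prod.fst_add, Prod.snd_add, add_mul, mul_add] <;> abel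

theorem soB_soMul (u v x : SplitOctonion) :
    soB (soMul u x) (soMul v x) = soB u v * soN x := by
  simp only [soB, ← soMul_add_left, soN_soMul]
  ring

theorem soMul_one_left (x : SplitOctonion) : soMul (1, 0) x = x := by
  simp [soMul]

/-- Right multiplication by a unit split octonion parallelizes the
pseudo-sphere `S^{3,4}`: if `N(x) = 1`, the seven tangent vectors `eᵢ·x` are
orthogonal to `x` and form a Lorentz-orthonormal frame at `x`. -/
theorem splitOctonion_parallelization (x : SplitOctonion) (hx : soN x = 1) :
    (∀ i : Fin 7, soB (soMul (soUnit i) x) x = 0) ∧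
    (∀ i j : Fin 7, soB (soMul (soUnit i) x) (soMul (soUnit j) x) = eta34 i j) := by
  constructor
  · intro i
    have h := soB_soMul (soUnit i) (1, 0) x
    rw [soMul_one_left, hx, mul_one] at h
    rw [h, soB_eq]
    fin_cases i <;> simp [so_re_zero, so_imI_zero, so_imJ_zero, so_imK_zero,
        so_re_one, so_imI_one, so_imJ_one, so_imK_one, soUnit]
  · intro i j
    rw [soB_soMul, hx, mul_one, soB_eq]
    fin_cases i <;> fin_cases j <;>
      simp [so_re_zero, so_imI_zero, so_imJ_zero, so_imK_zero,
        so_re_one, so_imI_one, so_imJ_one, so_imK_one, soUnit, eta34]
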